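/- Let B be a standard one-dimensional Brownian motion. Then almost surely, for every t ≥ 0 the function s ↦ B(s) is not differentiable at t. -/

import Mathlib

open MeasureTheory ProbabilityTheory

/-- `B` is a standard one-dimensional Brownian motion (on times `t ≥ 0`) under the
probability measure `P`: each path is continuous on `[0, ∞)`, and `B` is a centered
Gaussian process with covariance `Cov(B_s, B_t) = min s t`, i.e. every finite linear
combination `∑ cᵢ B(tᵢ)` is centered Gaussian with variance `∑ᵢ ∑ⱼ cᵢ cⱼ min tᵢ tⱼ`. -/
def IsBrownianMotion {Ω : Type*} [MeasurableSpace Ω] (P : Measure Ω)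
    (B : Ω → ℝ → ℝ) : Prop :=
  (∀ ω, ContinuousOn (B ω) (Set.Ici 0)) ∧
  (∀ (n : ℕ) (t : Fin n → ℝ), (∀ i, 0 ≤ t i) → ∀ c : Fin n → ℝ,
    Measure.map (fun ω => ∑ i, c i * B ω (t i)) P =
      gaussianReal 0 (∑ i, ∑ j, c i * c j * min (t i) (t j)).toNNReal)


/-!
The Dvoretzky–Erdős–Kakutani argument: if `X s - X t = O((s - t) ^ α)` as `s ↓ t`, then for all
large `n` the first `r` increments of `X` over the mesh of size `1 / n` to the right of `t` are
`O(n ^ (-α))`. An increment of a Brownian motion over this mesh has a density bounded by `√n`, so it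
is that small with probability `O(n ^ (1 / 2 - α))`. By independence and a union bound over the
`O(n)` possible starting points, some `r` consecutive increments are that small with probability
`O(n ^ (1 - r * (α - 1 / 2)))`, which tends to `0` as soon as `r * (α - 1 / 2) > 1`.
Nondifferentiability is the case `α = 1`, where `r = 3` suffices.
-/

open Filter Set Asymptotics
open scoped NNReal ENNReal Topology

section SmallIncrements

variable {E : Type*} [SeminormedAddCommGroup E]

/-- The path `f` has `r` consecutive increments of norm at most `ε` over the mesh of size `1 / n`,
the first of them starting at some `k / n` with `k < N`. -/
def HasSmallIncrements (f : ℝ≥0 → E) (n N r : ℕ) (ε : ℝ) : Prop :=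
  ∃ k < N, ∀ i < r, ‖f ((k + (i + 1) : ℕ) / n) - f ((k + i : ℕ) / n)‖ ≤ ε

lemma HasSmallIncrements.mono {f : ℝ≥0 → E} {n N r : ℕ} {ε ε' : ℝ}
    (hf : HasSmallIncrements f n N r ε) (hε : ε ≤ ε') : HasSmallIncrements f n N r ε' :=
  let ⟨k, hk, hle⟩ := hf
  ⟨k, hk, fun i hi ↦ (hle i hi).trans hε⟩

lemma floor_add_div_mem_Ioc (t : ℝ≥0) {n i r : ℕ} (hn : 0 < n) (hi : i ≤ r) :
    ((⌊t * n⌋₊ + 1 + i : ℕ) : ℝ≥0) / n ∈ Ioc t (t + (r + 1) / n) := by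
  have hn' : (0 : ℝ≥0) < n := by exact_mod_cast hn
  push_cast
  constructor
  · calc t < (⌊t * n⌋₊ + 1) / n := (lt_div_iff₀ hn').2 (Nat.lt_floor_add_one _)
      _ ≤ (⌊t * n⌋₊ + 1 + i) / n := by gcongr ?_ / n; exact le_self_add
  · calc (⌊t * n⌋₊ + 1 + i : ℝ≥0) / n ≤ (t * n + 1 + r) / n := by
          gcongr
          exact Nat.floor_le zero_le
      _ = t + (r + 1) / n := by field_simp; ring

lemma hasSmallIncrements_of_norm_sub_le {f : ℝ≥0 → E} {t u : ℝ≥0} {α c : ℝ} (hα : 0 ≤ α)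
    (hc : 0 ≤ c) (hf : ∀ s ∈ Ioo t u, ‖f s - f t‖ ≤ c * (s - t : ℝ) ^ α) {n N r : ℕ}
    (hn : 0 < n) (hu : t + (r + 1) / n < u) (hN : ⌊t * n⌋₊ + 1 < N) :
    HasSmallIncrements f n N r (2 * c * ((r + 1) / n) ^ α) := by
  have hgrid (i : ℕ) (hi : i ≤ r) :
      ‖f ((⌊t * n⌋₊ + 1 + i : ℕ) / n) - f t‖ ≤ c * ((r + 1) / n : ℝ) ^ α := by
    obtain ⟨hlt, hle⟩ := floor_add_div_mem_Ioc t hn hi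
    refine (hf _ ⟨hlt, hle.trans_lt hu⟩).trans ?_
    have hlt' : (t : ℝ) ≤ ((⌊t * n⌋₊ + 1 + i : ℕ) / n : ℝ≥0) := by exact_mod_cast hlt.le
    have hle' : (((⌊t * n⌋₊ + 1 + i : ℕ) / n : ℝ≥0) : ℝ) ≤ t + (r + 1) / n := by exact_mod_cast hle
    gcongr
    linarith
  refine ⟨_, hN, fun i hi ↦ ?_⟩
  calc _ ≤ _ + _ := norm_sub_le_norm_sub_add_norm_sub _ (f t) _
    _ ≤ c * ((r + 1) / n : ℝ) ^ α + c * ((r + 1) / n : ℝ) ^ α := by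
      gcongr
      exacts [hgrid _ hi, norm_sub_rev (f t) _ ▸ hgrid i hi.le]
    _ = _ := by ring

lemma exists_eventually_hasSmallIncrements_of_isBigO {f : ℝ≥0 → E} {t : ℝ≥0} {α : ℝ} (hα : 0 ≤ α)
    (hf : (fun s ↦ f s - f t) =O[𝓝[>] t] fun s ↦ (s - t : ℝ) ^ α) (r : ℕ) :
    ∃ K M : ℕ, ∀ᶠ n : ℕ in atTop, HasSmallIncrements f n (K * n) r (M / n ^ α) := by
  obtain ⟨c, hc, hbound⟩ := hf.exists_nonneg
  obtain ⟨u, htu, hu⟩ := mem_nhdsGT_iff_exists_Ioo_subset.1 hbound.bound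
  obtain ⟨K, hK⟩ := exists_nat_gt (t + 1)
  obtain ⟨M, hM⟩ := exists_nat_ge (2 * c * (r + 1 : ℝ) ^ α)
  have hlip (s : ℝ≥0) (hs : s ∈ Ioo t u) : ‖f s - f t‖ ≤ c * (s - t : ℝ) ^ α := by
    have hst : 0 ≤ (s - t : ℝ) := sub_nonneg.2 hs.1.le
    simpa only [mem_ofPred_eq, Real.norm_of_nonneg (Real.rpow_nonneg hst α)] using hu hs
  have hmesh : Tendsto (fun n : ℕ ↦ t + (r + 1) / n) atTop (𝓝 t) := by
    simpa using (tendsto_const_div_atTop_nhds_zero_nat (r + 1 : ℝ≥0)).const_add t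
  refine ⟨K, M, ?_⟩
  filter_upwards [eventually_gt_atTop 0, hmesh.eventually_lt_const htu] with n hn hnu
  have hN : ⌊t * n⌋₊ + 1 < K * n := by
    have hn1 : (1 : ℝ≥0) ≤ n := by exact_mod_cast hn
    have : (⌊t * n⌋₊ + 1 : ℝ≥0) < K * n :=
      calc (⌊t * n⌋₊ + 1 : ℝ≥0) ≤ t * n + n := by gcongr; exact Nat.floor_le zero_le
        _ = (t + 1) * n := by ring
        _ < K * n := by gcongr
    exact_mod_cast this
  refine (hasSmallIncrements_of_norm_sub_le hα hc hlip hn hnu hN).mono ?_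
  rw [Real.div_rpow (by positivity) (by positivity), ← mul_div_assoc]
  gcongr

end SmallIncrements

lemma ae_frequently_not_of_tendsto_measure_zero {Ω ι : Type*} [MeasurableSpace Ω] {μ : Measure Ω}
    {l : Filter ι} [l.NeBot] [l.IsCountablyGenerated] {p : ι → Ω → Prop}
    (hp : Tendsto (fun i ↦ μ {ω | p i ω}) l (𝓝 0)) : ∀ᵐ ω ∂μ, ∃ᶠ i in l, ¬ p i ω := by
  obtain ⟨U, hU⟩ := l.exists_antitone_basis
  have hnull (n : ℕ) : ∀ᵐ ω ∂μ, ¬ ∀ i ∈ U n, p i ω := by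
    simp only [ae_iff, not_not]
    refine le_antisymm (ge_of_tendsto hp ?_) zero_le
    filter_upwards [hU.mem n] with i hi using measure_mono fun ω hω ↦ hω i hi
  filter_upwards [ae_all_iff.2 hnull] with ω hω
  simpa only [hU.frequently_iff, true_imp_iff, not_forall, exists_prop] using hω

lemma tendsto_mul_div_rpow_pow_atTop_zero {α β : ℝ} {r : ℕ} (hr : 1 < r * (α - β))
    (a b : ℝ) : Tendsto (fun n : ℕ ↦ a * n * (b / n ^ α / (1 / n : ℝ) ^ β) ^ r) atTop (𝓝 0) := by
  have hlim : Tendsto (fun n : ℕ ↦ a * b ^ r * (n : ℝ) ^ (-(r * (α - β) - 1))) atTop (𝓝 0) := by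
    simpa using ((tendsto_rpow_neg_atTop (sub_pos.2 hr)).comp
      tendsto_natCast_atTop_atTop).const_mul (a * b ^ r)
  refine hlim.congr' ?_
  filter_upwards [eventually_gt_atTop 0] with n hn
  have hn' : (0 : ℝ) < n := by exact_mod_cast hn
  have hratio : b / (n : ℝ) ^ α / (1 / n : ℝ) ^ β = b * (n : ℝ) ^ (-(α - β)) := by
    rw [one_div, Real.inv_rpow hn'.le, div_inv_eq_mul, neg_sub, Real.rpow_sub hn']
    ring
  rw [hratio, mul_pow, ← Real.rpow_mul_natCast hn'.le, neg_sub, sub_eq_add_neg,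
    Real.rpow_add hn', Real.rpow_one]
  ring_nf

section IndependentIncrements

variable {Ω E : Type*} [MeasurableSpace Ω] {P : Measure Ω} [SeminormedAddCommGroup E]
  [MeasurableSpace E] [OpensMeasurableSpace E] {X : ℝ≥0 → Ω → E}

/-- The small ball estimate `P (‖X t - X s‖ ≤ ε) ≤ C * ε / (t - s) ^ β` for the increments of the
process `X`: an increment over a time `h` rarely has norm much smaller than `h ^ β`. -/
def HasSmallBallBound (X : ℝ≥0 → Ω → E) (P : Measure Ω) (C : ℝ≥0) (β : ℝ) : Prop :=
  ∀ ⦃s t : ℝ≥0⦄, s < t → ∀ ε : ℝ,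
    P {ω | ‖X t ω - X s ω‖ ≤ ε} ≤ ENNReal.ofReal (C * ε / (t - s : ℝ) ^ β)

lemma measure_hasSmallIncrements_le (hX : HasIndepIncrements X P) {n : ℕ} {ε : ℝ} {p : ℝ≥0∞}
    (hp : ∀ k : ℕ, P {ω | ‖X ((k + 1 : ℕ) / n) ω - X (k / n) ω‖ ≤ ε} ≤ p) (N r : ℕ) :
    P {ω | HasSmallIncrements (X · ω) n N r ε} ≤ N * p ^ r := by
  let A (k i : ℕ) : Set Ω :=
    (fun ω ↦ X ((k + (i + 1) : ℕ) / n) ω - X ((k + i : ℕ) / n) ω) ⁻¹' {x | ‖x‖ ≤ ε}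
  have hmeas : MeasurableSet {x : E | ‖x‖ ≤ ε} :=
    (isClosed_le continuous_norm continuous_const).measurableSet
  have hindep (k : ℕ) : P (⋂ i ∈ Finset.range r, A k i) = ∏ i ∈ Finset.range r, P (A k i) := by
    have hmono : Monotone fun i : ℕ ↦ ((k + i : ℕ) / n : ℝ≥0) :=
      fun i j hij ↦ by dsimp only; gcongr
    exact (hX.nat hmono).measure_inter_preimage_eq_mul _ fun _ _ ↦ hmeas
  calc P {ω | HasSmallIncrements (X · ω) n N r ε}
      = P (⋃ k ∈ Finset.range N, ⋂ i ∈ Finset.range r, A k i) := by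
        congr 1
        ext ω
        simp [HasSmallIncrements, A]
    _ ≤ ∑ k ∈ Finset.range N, ∏ i ∈ Finset.range r, P (A k i) := by
        simpa only [hindep] using
          measure_biUnion_finset_le (μ := P) (Finset.range N) fun k ↦ ⋂ i ∈ Finset.range r, A k i
    _ ≤ ∑ _k ∈ Finset.range N, p ^ r := by
        gcongr with k
        exact (Finset.prod_le_pow_card _ _ p fun i _ ↦ hp (k + i)).trans_eq (by simp)
    _ = N * p ^ r := by simp

lemma tendsto_measure_hasSmallIncrements_atTop_zero (hX : HasIndepIncrements X P) {C : ℝ≥0}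
    {α β : ℝ} (hsmall : HasSmallBallBound X P C β) {r : ℕ} (hr : 1 < r * (α - β)) (K M : ℕ) :
    Tendsto (fun n : ℕ ↦ P {ω | HasSmallIncrements (X · ω) n (K * n) r (M / n ^ α)})
      atTop (𝓝 0) := by
  have hlim : Tendsto (fun n : ℕ ↦
      ENNReal.ofReal (K * n * (C * M / n ^ α / (1 / n : ℝ) ^ β) ^ r)) atTop (𝓝 0) := by
    simpa only [ENNReal.ofReal_zero] using
      ENNReal.tendsto_ofReal (tendsto_mul_div_rpow_pow_atTop_zero hr K (C * M))
  refine tendsto_of_tendsto_of_tendsto_of_le_of_le' tendsto_const_nhds hlim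
    (.of_forall fun _ ↦ zero_le) ?_
  filter_upwards [eventually_gt_atTop 0] with n hn
  have hincr (k : ℕ) : P {ω | ‖X ((k + 1 : ℕ) / n) ω - X (k / n) ω‖ ≤ M / n ^ α} ≤
      ENNReal.ofReal (C * M / n ^ α / (1 / n : ℝ) ^ β) := by
    have hlt : (k / n : ℝ≥0) < (k + 1 : ℕ) / n := by gcongr; exact k.lt_succ_self
    have hlen : (((k + 1 : ℕ) / n : ℝ≥0) - (k / n : ℝ≥0) : ℝ) = 1 / n := by push_cast; ring
    simpa only [hlen, mul_div_assoc] using hsmall hlt (M / n ^ α)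
  refine (measure_hasSmallIncrements_le hX hincr _ _).trans_eq ?_
  rw [← ENNReal.ofReal_pow (by positivity), ← ENNReal.ofReal_natCast,
    ← ENNReal.ofReal_mul (by positivity), Nat.cast_mul]

theorem ae_forall_not_isBigO_of_hasIndepIncrements (hX : HasIndepIncrements X P) {C : ℝ≥0}
    {α β : ℝ} (hsmall : HasSmallBallBound X P C β) (hα : 0 ≤ α) (hβα : β < α) :
    ∀ᵐ ω ∂P, ∀ t : ℝ≥0, ¬ (fun s ↦ X s ω - X t ω) =O[𝓝[>] t] fun s ↦ (s - t : ℝ) ^ α := by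
  obtain ⟨r, hr⟩ : ∃ r : ℕ, 1 < r * (α - β) := by
    obtain ⟨r, hr⟩ := exists_nat_gt (1 / (α - β))
    exact ⟨r, (div_lt_iff₀ (sub_pos.2 hβα)).1 hr⟩
  have hfreq (K M : ℕ) : ∀ᵐ ω ∂P, ∃ᶠ n : ℕ in atTop,
      ¬ HasSmallIncrements (X · ω) n (K * n) r (M / n ^ α) :=
    ae_frequently_not_of_tendsto_measure_zero
      (tendsto_measure_hasSmallIncrements_atTop_zero hX hsmall hr K M)
  filter_upwards [ae_all_iff.2 fun K ↦ ae_all_iff.2 (hfreq K)] with ω hω t ht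
  obtain ⟨K, M, h⟩ := exists_eventually_hasSmallIncrements_of_isBigO hα ht r
  exact hω K M (h.mono fun _ ↦ not_not_intro)

end IndependentIncrements

lemma gaussianReal_le_volume (m : ℝ) {v : ℝ≥0} (hv : v ≠ 0) (s : Set ℝ) :
    gaussianReal m v s ≤ ENNReal.ofReal (√(2 * Real.pi * v))⁻¹ * volume s := by
  have hpdf (x : ℝ) : gaussianPDF m v x ≤ ENNReal.ofReal (√(2 * Real.pi * v))⁻¹ := by
    refine ENNReal.ofReal_le_ofReal (mul_le_of_le_one_right (by positivity) ?_)
    exact Real.exp_le_one_iff.2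
      (div_nonpos_of_nonpos_of_nonneg (neg_nonpos.2 (sq_nonneg _)) (by positivity))
  rw [gaussianReal_apply m hv, ← setLIntegral_const]
  exact lintegral_mono hpdf

section PreBrownian

variable {Ω : Type*} [MeasurableSpace Ω] {P : Measure Ω} {X : ℝ≥0 → Ω → ℝ}

lemma hasSmallBallBound_of_isPreBrownianReal (hX : IsPreBrownianReal X P) :
    HasSmallBallBound X P (2 / NNReal.sqrt (2 * NNReal.pi)) (1 / 2) := by
  intro s t hst ε
  have hvar : nndist t.1 s.1 = t - s := by
    ext
    rw [coe_nndist, Real.dist_eq, NNReal.coe_sub hst.le]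
    exact abs_of_nonneg (sub_nonneg.2 hst.le)
  have hlaw := hX.hasLaw_sub t s
  rw [hvar] at hlaw
  calc P {ω | ‖X t ω - X s ω‖ ≤ ε} = gaussianReal 0 (t - s) (Metric.closedBall 0 ε) := by
        rw [← hlaw.map_eq, Measure.map_apply_of_aemeasurable hlaw.aemeasurable
          Metric.isClosed_closedBall.measurableSet]
        simp [preimage, Metric.mem_closedBall]
    _ ≤ ENNReal.ofReal (√(2 * Real.pi * (t - s : ℝ≥0)))⁻¹ * volume (Metric.closedBall (0 : ℝ) ε) :=
        gaussianReal_le_volume 0 (tsub_pos_of_lt hst).ne' _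
    _ = ENNReal.ofReal
          ((2 / NNReal.sqrt (2 * NNReal.pi) : ℝ≥0) * ε / (t - s : ℝ) ^ (1 / 2 : ℝ)) := by
        rw [Real.volume_closedBall, ← ENNReal.ofReal_mul (by positivity), NNReal.coe_sub hst.le,
          Real.sqrt_mul (by positivity), Real.sqrt_eq_rpow (_ - _)]
        congr 1
        push_cast [NNReal.coe_real_pi]
        field_simp

theorem bm_nowhere_differentiable_general (hX : IsPreBrownianReal X P) {α : ℝ} (hα : 1 / 2 < α) :
    ∀ᵐ ω ∂P, ∀ t : ℝ≥0, ¬ (fun s ↦ X s ω - X t ω) =O[𝓝[>] t] fun s ↦ (s - t : ℝ) ^ α :=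
  ae_forall_not_isBigO_of_hasIndepIncrements hX.hasIndepIncrements
    (hasSmallBallBound_of_isPreBrownianReal hX) (by linarith) hα

end PreBrownian

namespace IsBrownianMotion

variable {Ω : Type*} [MeasurableSpace Ω] {P : Measure Ω} {B : Ω → ℝ → ℝ}

lemma hasLaw_sum_mul (hB : IsBrownianMotion P B) {ι : Type*} [Fintype ι] (t : ι → ℝ≥0)
    (c : ι → ℝ) :
    HasLaw (fun ω ↦ ∑ i, c i * B ω (t i))
      (gaussianReal 0 (∑ i, ∑ j, c i * c j * min (t i : ℝ) (t j)).toNNReal) P := by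
  let e := (Fintype.equivFin ι).symm
  have hmap : P.map (fun ω ↦ ∑ i, c i * B ω (t i)) =
      gaussianReal 0 (∑ i, ∑ j, c i * c j * min (t i : ℝ) (t j)).toNNReal := by
    simp only [← e.sum_comp]
    exact hB.2 _ _ (fun k ↦ (t (e k)).2) _
  exact ⟨.of_map_ne_zero (hmap ▸ IsProbabilityMeasure.ne_zero _), hmap⟩

lemma hasLaw_eval (hB : IsBrownianMotion P B) (t : ℝ≥0) :
    HasLaw (fun ω ↦ B ω t) (gaussianReal 0 t) P := by
  simpa using hB.hasLaw_sum_mul (fun _ : Unit ↦ t) (fun _ ↦ 1)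

lemma hasLaw_add (hB : IsBrownianMotion P B) {s t : ℝ≥0} (hst : s ≤ t) :
    HasLaw (fun ω ↦ B ω s + B ω t) (gaussianReal 0 (3 * s + t)) P := by
  have hst' : (s : ℝ) ≤ t := hst
  have hlaw := hB.hasLaw_sum_mul ![s, t] (fun _ ↦ 1)
  have hvar : ((s : ℝ) + s + (s + t)).toNNReal = 3 * s + t := by
    rw [← Real.toNNReal_coe (r := 3 * s + t)]
    congr 1
    push_cast
    ring
  simpa only [Fin.sum_univ_two, Matrix.cons_val_zero, Matrix.cons_val_one, one_mul, min_self,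
    min_eq_left hst', min_eq_right hst', hvar] using hlaw

lemma isGaussianProcess (hB : IsBrownianMotion P B) :
    IsGaussianProcess (fun (t : ℝ≥0) ω ↦ B ω t) P where
  hasGaussianLaw I := by
    have hmeas : AEMeasurable (fun ω ↦ I.restrict (fun t : ℝ≥0 ↦ B ω t)) P :=
      aemeasurable_pi_lambda _ fun i ↦ (hB.hasLaw_eval i).aemeasurable
    refine ⟨isGaussian_of_map_eq_gaussianReal fun L ↦ ?_⟩
    have hL (x : I → ℝ) : L x = ∑ i, L (Pi.single i 1) * x i := by
      rw [← L.sum_comp_single ℝ]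
      refine Finset.sum_congr rfl fun i _ ↦ ?_
      rw [mul_comm, ← smul_eq_mul, ← map_smul, ← Pi.single_smul, smul_eq_mul, mul_one]
      rfl
    have hlaw := hB.hasLaw_sum_mul (fun i : I ↦ (i : ℝ≥0)) fun i ↦ L (Pi.single i 1)
    refine ⟨0, _, .trans ?_ hlaw.map_eq⟩
    rw [AEMeasurable.map_map_of_aemeasurable (by fun_prop) hmeas]
    exact congrArg P.map (funext fun ω ↦ hL _)

lemma isPreBrownianReal (hB : IsBrownianMotion P B) :
    IsPreBrownianReal (fun (t : ℝ≥0) ω ↦ B ω t) P := by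
  have hG := hB.isGaussianProcess
  have := hG.isProbabilityMeasure
  refine hG.isPreBrownianReal_of_covariance (fun t ↦ ?_) fun s t hst ↦ ?_
  · rw [(hB.hasLaw_eval t).integral_eq, integral_id_gaussianReal]
  · have hpolar := variance_fun_add (hG.hasGaussianLaw_eval s).memLp_two
      (hG.hasGaussianLaw_eval t).memLp_two
    rw [(hB.hasLaw_add hst).variance_eq, (hB.hasLaw_eval s).variance_eq,
      (hB.hasLaw_eval t).variance_eq] at hpolar
    simp only [variance_id_gaussianReal, NNReal.coe_add, NNReal.coe_mul, NNReal.coe_ofNat] at hpolar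
    linarith

end IsBrownianMotion

lemma isBigO_sub_nhdsGT_of_differentiableWithinAt_Ici {F : Type*} [NormedAddCommGroup F]
    [NormedSpace ℝ F] {f : ℝ → F} {t : ℝ≥0} (hf : DifferentiableWithinAt ℝ f (Ici 0) t) :
    (fun s : ℝ≥0 ↦ f s - f t) =O[𝓝[>] t] fun s ↦ (s - t : ℝ) := by
  have hcoe : Tendsto ((↑) : ℝ≥0 → ℝ) (𝓝[>] t) (𝓝[Ici 0] t) :=
    tendsto_nhdsWithin_iff.2
      ⟨(NNReal.continuous_coe.tendsto t).mono_left nhdsWithin_le_nhds, .of_forall fun s ↦ s.2⟩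
  exact hf.isBigO_sub.comp_tendsto hcoe

/-- Almost surely, a standard one-dimensional Brownian motion is nowhere differentiable:
for every `t ≥ 0`, the function `s ↦ B s` (on `[0, ∞)`) is not differentiable at `t`. -/
theorem bm_nowhere_differentiable {Ω : Type*} [MeasurableSpace Ω] (P : Measure Ω)
    [IsProbabilityMeasure P] (B : Ω → ℝ → ℝ)
    (hB : IsBrownianMotion P B) :
    ∀ᵐ ω ∂P, ∀ t : ℝ, 0 ≤ t → ¬ DifferentiableWithinAt ℝ (B ω) (Set.Ici 0) t := by
  filter_upwards [bm_nowhere_differentiable_general hB.isPreBrownianReal one_half_lt_one]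
    with ω hω t ht hdiff
  refine hω ⟨t, ht⟩ ?_
  simpa only [Real.rpow_one] using
    isBigO_sub_nhdsGT_of_differentiableWithinAt_Ici (t := ⟨t, ht⟩) hdiff
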